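/- arXiv:2402.02291 — 6 statements merged into one kernel-verified Lean document; each statement's English description precedes it below -/
import Mathlib

section
/- Let K and Θ be bounded operators on H with ΘK = KΘ, let S be a Moore–Penrose inverse of Θ, and assume ran(K*) ⊆ ran(Θ). If {Υ_ξ}_{ξ∈Ω} is a continuous K-g-frame for H with bounds A, B, then for every f ∈ H one has A·‖S*‖⁻²·‖K* f‖² ≤ ∫_Ω ‖Υ_ξ Θ* f‖² dν(ξ) ≤ B·‖Θ*‖²·‖f‖²; in particular {Υ_ξ Θ*}_{ξ∈Ω} is a continuous K-g-frame for H. -/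
open MeasureTheory ContinuousLinearMap

noncomputable section

/-- `Υ` is a continuous `K`-g-frame for `H` with bounds `A ≤ B`. -/
def IsCKgFrame {Ω H E : Type*} [MeasurableSpace Ω]
    [NormedAddCommGroup H] [InnerProductSpace ℂ H] [CompleteSpace H]
    [NormedAddCommGroup E] [InnerProductSpace ℂ E]
    (ν : Measure Ω) (K : H →L[ℂ] H) (Υ : Ω → H →L[ℂ] E) (A B : ℝ) : Prop :=
  0 < A ∧ A ≤ B ∧ ∀ h : H,
    Integrable (fun ξ => ‖Υ ξ h‖ ^ 2) ν ∧
    A * ‖adjoint K h‖ ^ 2 ≤ ∫ ξ, ‖Υ ξ h‖ ^ 2 ∂ν ∧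
    ∫ ξ, ‖Υ ξ h‖ ^ 2 ∂ν ≤ B * ‖h‖ ^ 2

/-- `S` is a Moore–Penrose inverse of `Θ`. -/
def IsMoorePenroseInv {H : Type*} [NormedAddCommGroup H] [InnerProductSpace ℂ H]
    [CompleteSpace H] (Θ S : H →L[ℂ] H) : Prop :=
  Θ ∘L S ∘L Θ = Θ ∧ S ∘L Θ ∘L S = S ∧
    adjoint (Θ ∘L S) = Θ ∘L S ∧ adjoint (S ∘L Θ) = S ∘L Θ

theorem stmt0 {Ω H E : Type*} [MeasurableSpace Ω]
    [NormedAddCommGroup H] [InnerProductSpace ℂ H] [CompleteSpace H]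
    [NormedAddCommGroup E] [InnerProductSpace ℂ E]
    (ν : Measure Ω) (K Θ S : H →L[ℂ] H) (Υ : Ω → H →L[ℂ] E) (A B : ℝ)
    (hcomm : Θ ∘L K = K ∘L Θ)
    (hMP : IsMoorePenroseInv Θ S)
    (hran : Set.range ⇑(adjoint K) ⊆ Set.range ⇑Θ)
    (hframe : IsCKgFrame ν K Υ A B) :
    (∀ f : H,
      A * (‖adjoint S‖ ^ 2)⁻¹ * ‖adjoint K f‖ ^ 2
          ≤ ∫ ξ, ‖Υ ξ (adjoint Θ f)‖ ^ 2 ∂ν ∧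
      ∫ ξ, ‖Υ ξ (adjoint Θ f)‖ ^ 2 ∂ν ≤ B * ‖adjoint Θ‖ ^ 2 * ‖f‖ ^ 2) ∧
    ∃ A' B' : ℝ, IsCKgFrame ν K (fun ξ => (Υ ξ).comp (adjoint Θ)) A' B' := by
  obtain ⟨hA, hAB, hf⟩ := hframe
  obtain ⟨h1, -, h3, -⟩ := hMP
  have key : ∀ f : H, ‖adjoint K f‖ ≤ ‖adjoint S‖ * ‖adjoint K (adjoint Θ f)‖ := by
    intro f
    have e : adjoint K f = adjoint S (adjoint K (adjoint Θ f)) := by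
      obtain ⟨g, hg⟩ := hran ⟨f, rfl⟩
      have a1 : Θ (S (Θ g)) = Θ g := DFunLike.congr_fun h1 g
      rw [hg] at a1
      rw [adjoint_comp] at h3
      have a2 : adjoint S (adjoint Θ (adjoint K f)) = Θ (S (adjoint K f)) :=
        DFunLike.congr_fun h3 _
      have h4 := congrArg adjoint hcomm
      rw [adjoint_comp, adjoint_comp] at h4
      have a3 : adjoint K (adjoint Θ f) = adjoint Θ (adjoint K f) := DFunLike.congr_fun h4 f
      rw [a3, a2, a1]
    calc ‖adjoint K f‖ = ‖adjoint S (adjoint K (adjoint Θ f))‖ := by rw [← e]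
      _ ≤ _ := le_opNorm _ _
  have key2 : ∀ f : H,
      ‖adjoint K f‖ ^ 2 ≤ ‖adjoint S‖ ^ 2 * ‖adjoint K (adjoint Θ f)‖ ^ 2 := by
    intro f
    rw [← mul_pow]
    exact pow_le_pow_left₀ (norm_nonneg _) (key f) 2
  have low : ∀ (c : ℝ), ‖adjoint S‖ ^ 2 ≤ c → ∀ f : H,
      A * c⁻¹ * ‖adjoint K f‖ ^ 2 ≤ ∫ ξ, ‖Υ ξ (adjoint Θ f)‖ ^ 2 ∂ν := by
    intro c hc f
    refine le_trans ?_ (hf (adjoint Θ f)).2.1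
    rw [mul_assoc]
    refine mul_le_mul_of_nonneg_left ?_ hA.le
    have hc0 : 0 ≤ c := le_trans (by positivity) hc
    refine inv_mul_le_of_le_mul₀ hc0 (by positivity) ((key2 f).trans ?_)
    gcongr
  have up : ∀ f : H,
      ∫ ξ, ‖Υ ξ (adjoint Θ f)‖ ^ 2 ∂ν ≤ B * ‖adjoint Θ‖ ^ 2 * ‖f‖ ^ 2 := by
    intro f
    refine (hf (adjoint Θ f)).2.2.trans ?_
    rw [mul_assoc, ← mul_pow]
    have hB : 0 ≤ B := hA.le.trans hAB
    gcongr
    exact le_opNorm _ _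
  refine ⟨fun f => ⟨low _ le_rfl f, up f⟩, A * (‖adjoint S‖ ^ 2 + 1)⁻¹,
    max (A * (‖adjoint S‖ ^ 2 + 1)⁻¹) (B * ‖adjoint Θ‖ ^ 2), by positivity,
    le_max_left _ _, fun h => ⟨(hf (adjoint Θ h)).1, low _ (by linarith) h, (up h).trans ?_⟩⟩
  gcongr
  exact le_max_right _ _
end
end

section
/- Let K and Θ be bounded operators on H such that K has dense range, Θ has closed range, and ΘK = KΘ. If both {Υ_ξ ∘ Θ}_{ξ∈Ω} and {Υ_ξ ∘ Θ*}_{ξ∈Ω} are continuous K-g-frames for H, then {Υ_ξ}_{ξ∈Ω} is a continuous K-g-frame for H. -/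
open MeasureTheory ContinuousLinearMap

noncomputable section

theorem stmt1 {Ω H E : Type*} [MeasurableSpace Ω]
    [NormedAddCommGroup H] [InnerProductSpace ℂ H] [CompleteSpace H]
    [NormedAddCommGroup E] [InnerProductSpace ℂ E]
    (ν : Measure Ω) (K Θ : H →L[ℂ] H) (Υ : Ω → H →L[ℂ] E)
    (hdense : DenseRange ⇑K)
    (hclosed : IsClosed (Set.range ⇑Θ))
    (hcomm : Θ ∘L K = K ∘L Θ)
    (h1 : ∃ A B : ℝ, IsCKgFrame ν K (fun ξ => (Υ ξ).comp Θ) A B)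
    (h2 : ∃ A B : ℝ, IsCKgFrame ν K (fun ξ => (Υ ξ).comp (adjoint Θ)) A B) :
    ∃ A B : ℝ, IsCKgFrame ν K Υ A B := by
  obtain ⟨A1, B1, hA1, hAB1, h1⟩ := h1
  obtain ⟨A2, B2, hA2, hAB2, h2⟩ := h2
  have Kinj : ∀ h : H, adjoint K h = 0 → h = 0 := by
    intro h hh
    refine hdense.eq_zero_of_inner_left (𝕜 := ℂ) ?_
    intro x
    rw [← adjoint_inner_left, hh, inner_zero_left]
  have key : ∀ (A : ℝ) (h : H), 0 < A → A * ‖adjoint K h‖ ^ 2 ≤ 0 → h = 0 := by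
    intro A h hA hle
    apply Kinj
    by_contra hne
    have : 0 < ‖adjoint K h‖ := norm_pos_iff.mpr hne
    have : 0 < A * ‖adjoint K h‖ ^ 2 := by positivity
    linarith
  have inj1 : Θ.ker = ⊥ := by
    refine LinearMap.ker_eq_bot'.mpr ?_
    intro h hh
    have hh' : Θ h = 0 := hh
    have := (h1 h).2.1
    simp only [ContinuousLinearMap.comp_apply, hh', map_zero] at this
    exact key A1 h hA1 (by simpa using this)
  have inj2 : (adjoint Θ).ker = ⊥ := by
    refine LinearMap.ker_eq_bot'.mpr ?_
    intro h hh
    have hh' : adjoint Θ h = 0 := hh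
    have := (h2 h).2.1
    simp only [ContinuousLinearMap.comp_apply, hh', map_zero] at this
    exact key A2 h hA2 (by simpa using this)
  have surj : Θ.range = ⊤ := by
    have hc : IsClosed (Θ.range : Set H) := hclosed
    have : CompleteSpace Θ.range := hc.completeSpace_coe
    rw [← Submodule.orthogonal_eq_bot_iff, ContinuousLinearMap.orthogonal_range, inj2]
  let e := ContinuousLinearEquiv.ofBijective Θ inj1 surj
  let S : H →L[ℂ] H := e.symm
  have hTS : ∀ h, Θ (S h) = h := fun h =>
    ContinuousLinearEquiv.ofBijective_apply_symm_apply Θ inj1 surj h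
  have hST : S ∘L Θ = ContinuousLinearMap.id ℂ H := by
    ext h
    exact ContinuousLinearEquiv.ofBijective_symm_apply_apply Θ inj1 surj h
  have hTS' : ∀ h, adjoint Θ (adjoint S h) = h := by
    intro h
    refine ext_inner_right ℂ fun v => ?_
    have := congrArg (fun T : H →L[ℂ] H => T v) hST
    rw [adjoint_inner_left, adjoint_inner_left]
    exact congrArg (inner ℂ h) this
  have hcomm' : ∀ h, adjoint K (adjoint Θ h) = adjoint Θ (adjoint K h) := by
    intro h
    have := congrArg adjoint hcomm
    rw [adjoint_comp, adjoint_comp] at this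
    exact congrArg (fun T : H →L[ℂ] H => T h) this
  have hB1 : 0 < B1 := hA1.trans_le hAB1
  set c := A2 / (‖adjoint Θ‖ ^ 2 + 1) with hc
  have hcpos : 0 < c := by positivity
  refine ⟨c, max c (B1 * ‖S‖ ^ 2), hcpos, le_max_left _ _, ?_⟩
  intro h
  have a1 := h1 (S h)
  have a2 := h2 (adjoint S h)
  simp only [ContinuousLinearMap.comp_apply, hTS] at a1
  simp only [ContinuousLinearMap.comp_apply, hTS'] at a2
  refine ⟨a1.1, le_trans ?_ a2.2.1, a1.2.2.trans ?_⟩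
  · have e1 : ‖adjoint K h‖ ≤ ‖adjoint Θ‖ * ‖adjoint K (adjoint S h)‖ := by
      conv_lhs => rw [← hTS' h, hcomm']
      exact ContinuousLinearMap.le_opNorm _ _
    have e2 : ‖adjoint K h‖ ^ 2 ≤ (‖adjoint Θ‖ ^ 2 + 1) * ‖adjoint K (adjoint S h)‖ ^ 2 := by
      have := pow_le_pow_left₀ (norm_nonneg _) e1 2
      nlinarith [sq_nonneg ‖adjoint K (adjoint S h)‖]
    calc c * ‖adjoint K h‖ ^ 2
        ≤ c * ((‖adjoint Θ‖ ^ 2 + 1) * ‖adjoint K (adjoint S h)‖ ^ 2) := by gcongr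
      _ = A2 * ‖adjoint K (adjoint S h)‖ ^ 2 := by
        rw [hc]; field_simp
  · calc B1 * ‖S h‖ ^ 2 ≤ B1 * (‖S‖ * ‖h‖) ^ 2 := by
          gcongr
          exact S.le_opNorm h
      _ = (B1 * ‖S‖ ^ 2) * ‖h‖ ^ 2 := by ring
      _ ≤ _ := by
          gcongr
          exact le_max_right _ _
end
end

section
/- Let K and Θ be bounded operators on H with ΘK = KΘ, let {Υ_ξ}_{ξ∈Ω} be a δ-tight continuous K-g-frame for H (δ > 0), and assume K* is bounded below, i.e. there is m > 0 with ‖K* f‖ ≥ m‖f‖ for all f ∈ H. If Θ is surjective, then {Υ_ξ ∘ Θ*}_{ξ∈Ω} is a continuous K-g-frame for H. -/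
open MeasureTheory ContinuousLinearMap

noncomputable section

/-- `Υ` is a `δ`-tight continuous `K`-g-frame for `H`. -/
def IsTightCKgFrame {Ω H E : Type*} [MeasurableSpace Ω]
    [NormedAddCommGroup H] [InnerProductSpace ℂ H] [CompleteSpace H]
    [NormedAddCommGroup E] [InnerProductSpace ℂ E]
    (ν : Measure Ω) (K : H →L[ℂ] H) (Υ : Ω → H →L[ℂ] E) (δ : ℝ) : Prop :=
  0 < δ ∧ ∀ h : H,
    Integrable (fun ξ => ‖Υ ξ h‖ ^ 2) ν ∧
    ∫ ξ, ‖Υ ξ h‖ ^ 2 ∂ν = δ * ‖adjoint K h‖ ^ 2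

theorem stmt2 {Ω H E : Type*} [MeasurableSpace Ω]
    [NormedAddCommGroup H] [InnerProductSpace ℂ H] [CompleteSpace H]
    [NormedAddCommGroup E] [InnerProductSpace ℂ E]
    (ν : Measure Ω) (K Θ : H →L[ℂ] H) (Υ : Ω → H →L[ℂ] E) (δ : ℝ)
    (hcomm : Θ ∘L K = K ∘L Θ)
    (htight : IsTightCKgFrame ν K Υ δ)
    (hbelow : ∃ m : ℝ, 0 < m ∧ ∀ f : H, m * ‖f‖ ≤ ‖adjoint K f‖)
    (hsurj : Function.Surjective ⇑Θ) :
    ∃ A B : ℝ, IsCKgFrame ν K (fun ξ => (Υ ξ).comp (adjoint Θ)) A B := by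
  obtain ⟨hδ, ht⟩ := htight
  obtain ⟨C, hC, hpre⟩ := Θ.exists_preimage_norm_le hsurj
  have hlow : ∀ f : H, ‖f‖ ≤ C * ‖adjoint Θ f‖ := by
    intro f
    obtain ⟨x, hx, hxn⟩ := hpre f
    rcases (norm_nonneg f).eq_or_lt with h0 | h0
    · rw [← h0]; positivity
    have h1 : ‖f‖ * ‖f‖ ≤ ‖adjoint Θ f‖ * ‖x‖ := by
      have h2 : inner ℂ (adjoint Θ f) x = inner ℂ f f := by
        rw [adjoint_inner_left, hx]
      have h3 := norm_inner_le_norm (𝕜 := ℂ) (adjoint Θ f) x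
      rw [h2, inner_self_eq_norm_sq_to_K] at h3
      simpa [pow_two] using h3
    have h4 : ‖adjoint Θ f‖ * ‖x‖ ≤ ‖adjoint Θ f‖ * (C * ‖f‖) := by gcongr
    have h5 : ‖f‖ * ‖f‖ ≤ (C * ‖adjoint Θ f‖) * ‖f‖ := by linarith
    exact le_of_mul_le_mul_right h5 h0
  have hc : ∀ h : H, adjoint K (adjoint Θ h) = adjoint Θ (adjoint K h) := by
    intro h
    have h1 := congrArg adjoint hcomm
    rw [adjoint_comp, adjoint_comp] at h1
    exact congrArg (fun T : H →L[ℂ] H => T h) h1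
  set M := ‖adjoint K ∘L adjoint Θ‖ with hM
  have hA : 0 < δ / C ^ 2 := by positivity
  have hB : 0 ≤ δ * M ^ 2 := by positivity
  refine ⟨δ / C ^ 2, δ / C ^ 2 + δ * M ^ 2, hA, by linarith, fun h => ?_⟩
  obtain ⟨hi, he⟩ := ht (adjoint Θ h)
  refine ⟨hi, ?_, ?_⟩
  · simp only [comp_apply]
    rw [he, hc, div_mul_eq_mul_div, div_le_iff₀ (by positivity)]
    have h1 : ‖adjoint K h‖ ^ 2 ≤ (C * ‖adjoint Θ (adjoint K h)‖) ^ 2 := by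
      gcongr
      exact hlow _
    have h2 := mul_le_mul_of_nonneg_left h1 hδ.le
    rw [mul_pow] at h2
    linarith
  · simp only [comp_apply]
    rw [he]
    have h1 : ‖adjoint K (adjoint Θ h)‖ ^ 2 ≤ (M * ‖h‖) ^ 2 := by
      gcongr
      exact (adjoint K ∘L adjoint Θ).le_opNorm h
    have h2 := mul_le_mul_of_nonneg_left h1 hδ.le
    rw [mul_pow] at h2
    have h3 : 0 ≤ δ / C ^ 2 * ‖h‖ ^ 2 := by positivity
    linarith
end
end

section
/- Let K and Θ be bounded operators on H with ΘK = KΘ, let {Υ_ξ}_{ξ∈Ω} be a δ-tight continuous K-g-frame for H (δ > 0), and assume K* is bounded below, i.e. there is m > 0 with ‖K* f‖ ≥ m‖f‖ for all f ∈ H. If {Υ_ξ ∘ Θ*}_{ξ∈Ω} is a continuous K-g-frame for H, then Θ is surjective. -/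
open MeasureTheory ContinuousLinearMap

noncomputable section

theorem stmt3 {Ω H E : Type*} [MeasurableSpace Ω]
    [NormedAddCommGroup H] [InnerProductSpace ℂ H] [CompleteSpace H]
    [NormedAddCommGroup E] [InnerProductSpace ℂ E]
    (ν : Measure Ω) (K Θ : H →L[ℂ] H) (Υ : Ω → H →L[ℂ] E) (δ : ℝ)
    (hcomm : Θ ∘L K = K ∘L Θ)
    (htight : IsTightCKgFrame ν K Υ δ)
    (hbelow : ∃ m : ℝ, 0 < m ∧ ∀ f : H, m * ‖f‖ ≤ ‖adjoint K f‖)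
    (hframe : ∃ A B : ℝ, IsCKgFrame ν K (fun ξ => (Υ ξ).comp (adjoint Θ)) A B) :
    Function.Surjective ⇑Θ := by
  obtain ⟨hδ, ht⟩ := htight
  obtain ⟨m, hm, hb⟩ := hbelow
  obtain ⟨A, B, hA, -, hf⟩ := hframe
  have key : ∀ h : H, A * m ^ 2 * ‖h‖ ^ 2 ≤ δ * (‖adjoint K‖ ^ 2 + 1) * ‖adjoint Θ h‖ ^ 2 := by
    intro h
    have h1 := (hf h).2.1
    have h2 := (ht (adjoint Θ h)).2
    simp only [ContinuousLinearMap.comp_apply] at h1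
    rw [h2] at h1
    have h3 : (m * ‖h‖) ^ 2 ≤ ‖adjoint K h‖ ^ 2 :=
      pow_le_pow_left₀ (by positivity) (hb h) 2
    have h4 : ‖adjoint K (adjoint Θ h)‖ ^ 2 ≤ (‖adjoint K‖ * ‖adjoint Θ h‖) ^ 2 :=
      pow_le_pow_left₀ (by positivity) ((adjoint K).le_opNorm _) 2
    have h5 := mul_le_mul_of_nonneg_left h3 hA.le
    have h6 := mul_le_mul_of_nonneg_left h4 hδ.le
    have h7 : 0 ≤ δ * ‖adjoint Θ h‖ ^ 2 := by positivity
    nlinarith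
  have hD : 0 < δ * (‖adjoint K‖ ^ 2 + 1) := by positivity
  have hc : 0 < A * m ^ 2 / (δ * (‖adjoint K‖ ^ 2 + 1)) := by positivity
  have hu : IsUnit (Θ ∘L adjoint Θ) := by
    refine ContinuousLinearMap.isUnit_of_forall_le_norm_inner_map (𝕜 := ℂ) _
      (c := ⟨_, hc.le⟩) hc ?_
    intro h
    have e : inner ℂ ((Θ ∘L adjoint Θ) h) h = ((‖adjoint Θ h‖ ^ 2 : ℝ) : ℂ) := by
      rw [ContinuousLinearMap.comp_apply, ← ContinuousLinearMap.adjoint_inner_right,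
        inner_self_eq_norm_sq_to_K]
      simp
    rw [e, Complex.norm_real, Real.norm_of_nonneg (by positivity)]
    have := key h
    change ‖h‖ ^ 2 * (A * m ^ 2 / (δ * (‖adjoint K‖ ^ 2 + 1))) ≤ _
    rw [mul_div_assoc', div_le_iff₀ hD]
    linarith
  intro y
  obtain ⟨u, hu⟩ := hu
  refine ⟨adjoint Θ ((↑u⁻¹ : H →L[ℂ] H) y), ?_⟩
  have h1 : (Θ ∘L adjoint Θ) * (↑u⁻¹ : H →L[ℂ] H) = 1 := by rw [← hu]; simp
  exact congrArg (fun T : H →L[ℂ] H => T y) h1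
end
end

section
/- Let K₁ and K₂ be bounded operators on H and let {Υ_ξ}_{ξ∈Ω} be a δ-tight continuous K₁-g-frame for H (δ > 0). If {Υ_ξ}_{ξ∈Ω} is also a continuous K₂-g-frame for H, then ran(K₂) ⊆ ran(K₁). -/
open MeasureTheory ContinuousLinearMap

noncomputable section

theorem stmt9 {Ω H E : Type*} [MeasurableSpace Ω]
    [NormedAddCommGroup H] [InnerProductSpace ℂ H] [CompleteSpace H]
    [NormedAddCommGroup E] [InnerProductSpace ℂ E]
    (ν : Measure Ω) (K1 K2 : H →L[ℂ] H) (Υ : Ω → H →L[ℂ] E) (δ : ℝ)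
    (htight : IsTightCKgFrame ν K1 Υ δ)
    (hframe : ∃ A B : ℝ, IsCKgFrame ν K2 Υ A B) :
    Set.range ⇑K2 ⊆ Set.range ⇑K1 := by
  obtain ⟨hδ, ht⟩ := htight
  obtain ⟨A, B, hA, hAB, hf⟩ := hframe
  have key : ∀ h : H, ‖adjoint K2 h‖ ≤ Real.sqrt (δ / A) * ‖adjoint K1 h‖ := by
    intro h
    have h1 := (hf h).2.1
    rw [(ht h).2] at h1
    refine (sq_le_sq₀ (norm_nonneg _) (by positivity)).mp ?_
    rw [mul_pow, Real.sq_sqrt (by positivity), div_mul_eq_mul_div, le_div_iff₀ hA]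
    linarith
  rintro _ ⟨x, rfl⟩
  let T : H →ₗ[ℂ] H := (adjoint K1).toLinearMap
  let φ : H →ₗ[ℂ] ℂ := ((innerSL ℂ x).comp (adjoint K2)).toLinearMap
  have hker : LinearMap.ker T ≤ LinearMap.ker φ := by
    intro h hh
    have h0 : adjoint K1 h = 0 := hh
    have h1 := key h
    rw [h0, norm_zero, mul_zero] at h1
    have h2 : adjoint K2 h = 0 := norm_le_zero_iff.mp h1
    change inner ℂ x (adjoint K2 h) = 0
    rw [h2, inner_zero_right]
  let g : LinearMap.range T →ₗ[ℂ] ℂ :=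
    ((LinearMap.ker T).liftQ φ hker).comp T.quotKerEquivRange.symm.toLinearMap
  have hg : ∀ h : H, g ⟨T h, LinearMap.mem_range_self T h⟩ = inner ℂ x (adjoint K2 h) := by
    intro h
    have : T.quotKerEquivRange.symm ⟨T h, LinearMap.mem_range_self T h⟩
        = (LinearMap.ker T).mkQ h := T.quotKerEquivRange_symm_apply_image h _
    change ((LinearMap.ker T).liftQ φ hker)
      (T.quotKerEquivRange.symm ⟨T h, LinearMap.mem_range_self T h⟩) = _
    rw [this]
    rfl
  have hgb : ∀ y : LinearMap.range T, ‖g y‖ ≤ (‖x‖ * Real.sqrt (δ / A)) * ‖y‖ := by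
    rintro ⟨_, h, rfl⟩
    rw [hg h, mul_assoc]
    exact (norm_inner_le_norm _ _).trans (mul_le_mul_of_nonneg_left (key h) (norm_nonneg _))
  obtain ⟨G, hG, -⟩ := exists_extension_norm_eq (LinearMap.range T) (g.mkContinuous _ hgb)
  refine ⟨(InnerProductSpace.toDual ℂ H).symm G, ?_⟩
  refine ext_inner_right ℂ fun h => ?_
  rw [← adjoint_inner_right, ← adjoint_inner_right, InnerProductSpace.toDual_symm_apply, ← hg h]
  exact hG ⟨T h, LinearMap.mem_range_self T h⟩
end
end

section
/- Let K₁ and K₂ be bounded operators on H and let {Υ_ξ}_{ξ∈Ω} be a δ-tight continuous K₁-g-frame for H (δ > 0). If ran(K₂) ⊆ ran(K₁), then {Υ_ξ}_{ξ∈Ω} is a continuous K₂-g-frame for H. -/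
open MeasureTheory ContinuousLinearMap

noncomputable section

theorem douglas_aux {H : Type*} [NormedAddCommGroup H] [InnerProductSpace ℂ H] [CompleteSpace H]
    (K1 K2 : H →L[ℂ] H) (hran : Set.range ⇑K2 ⊆ Set.range ⇑K1) :
    ∃ C : ℝ, 0 ≤ C ∧ ∀ h, ‖adjoint K2 h‖ ≤ C * ‖adjoint K1 h‖ := by
  have key : ∀ x : H, ∃ y : H, ∀ h : H, ‖inner ℂ (adjoint K2 h) x‖ ≤ ‖adjoint K1 h‖ * ‖y‖ := by
    intro x
    obtain ⟨y, hy⟩ := hran ⟨x, rfl⟩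
    refine ⟨y, fun h => ?_⟩
    rw [adjoint_inner_left, ← hy, ← adjoint_inner_left]
    exact norm_inner_le_norm _ _
  obtain ⟨C, hC⟩ := banach_steinhaus
    (g := fun h : H => ((‖adjoint K1 h‖⁻¹ : ℝ) : ℂ) • innerSL ℂ (adjoint K2 h)) (by
      intro x
      obtain ⟨y, hy⟩ := key x
      refine ⟨‖y‖, fun h => ?_⟩
      simp only [ContinuousLinearMap.smul_apply, innerSL_apply_apply, norm_smul,
        Complex.norm_real, norm_inv, norm_norm]
      rcases (norm_nonneg (adjoint K1 h)).eq_or_lt with h0 | h0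
      · rw [← h0]; simp
      · rw [inv_mul_le_iff₀ h0]
        exact hy h)
  refine ⟨C, (norm_nonneg _).trans (hC 0), fun h => ?_⟩
  rcases (norm_nonneg (adjoint K1 h)).eq_or_lt with h0 | h0
  · obtain ⟨y, hy⟩ := key (adjoint K2 h)
    have h1 := hy h
    rw [← h0, zero_mul, norm_le_zero_iff, inner_self_eq_zero] at h1
    rw [h1, ← h0]; simp
  · have h1 := hC h
    simp only [norm_smul, Complex.norm_real, norm_inv, norm_norm, innerSL_apply_norm] at h1
    rw [inv_mul_le_iff₀ h0] at h1
    linarith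

theorem stmt10 {Ω H E : Type*} [MeasurableSpace Ω]
    [NormedAddCommGroup H] [InnerProductSpace ℂ H] [CompleteSpace H]
    [NormedAddCommGroup E] [InnerProductSpace ℂ E]
    (ν : Measure Ω) (K1 K2 : H →L[ℂ] H) (Υ : Ω → H →L[ℂ] E) (δ : ℝ)
    (htight : IsTightCKgFrame ν K1 Υ δ)
    (hran : Set.range ⇑K2 ⊆ Set.range ⇑K1) :
    ∃ A B : ℝ, IsCKgFrame ν K2 Υ A B := by
  obtain ⟨hδ, ht⟩ := htight
  obtain ⟨C, hC0, hC⟩ := douglas_aux K1 K2 hran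
  have hpos : 0 < C ^ 2 + 1 := by positivity
  refine ⟨δ / (C ^ 2 + 1), max (δ / (C ^ 2 + 1)) (δ * ‖adjoint K1‖ ^ 2), by positivity,
    le_max_left _ _, fun h => ⟨(ht h).1, ?_, ?_⟩⟩
  · rw [(ht h).2, div_mul_eq_mul_div, div_le_iff₀ hpos, mul_assoc]
    refine mul_le_mul_of_nonneg_left ?_ hδ.le
    have h1 := pow_le_pow_left₀ (norm_nonneg _) (hC h) 2
    nlinarith [sq_nonneg ‖adjoint K1 h‖]
  · rw [(ht h).2]
    have h1 := pow_le_pow_left₀ (norm_nonneg _) ((adjoint K1).le_opNorm h) 2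
    calc δ * ‖adjoint K1 h‖ ^ 2 ≤ δ * (‖adjoint K1‖ * ‖h‖) ^ 2 :=
          mul_le_mul_of_nonneg_left h1 hδ.le
      _ = (δ * ‖adjoint K1‖ ^ 2) * ‖h‖ ^ 2 := by ring
      _ ≤ _ := mul_le_mul_of_nonneg_right (le_max_right _ _) (sq_nonneg _)
end
end
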